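/- Let μ : [0,∞) → [0,1] be nonincreasing with ∫₀^t μ(s) ds ≤ K·log(1+t) for all t > 0 and some K > 0, and suppose the limit lim_{r → ∞} (1/r)∫₀^∞ μ(s)^{1 + 1/r} ds = A exists. Then ω(g) = A for every linear functional ω on L∞((0,∞)) which is positive (ω(f) ≥ 0 whenever f ≥ 0 a.e.), satisfies ess liminf_{t → +∞} f(t) ≤ ω(f) ≤ ess limsup_{t → +∞} f(t) for every real-valued f ∈ L∞((0,∞)), and is dilation invariant: ω(f(·/c)) = ω(f) for every c > 0; here g(t) = (1/log(1+t))∫₀^t μ(s) ds for t > 0. -/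

import Mathlib

open Filter MeasureTheory

/-- A function is (everywhere) bounded. -/
def BddFun (f : ℝ → ℝ) : Prop := ∃ C : ℝ, ∀ x, |f x| ≤ C

/-- `g(t) = (1/log(1+t)) ∫₀^t μ(s) ds` for `t > 0` (and `0` for `t ≤ 0`). -/
noncomputable def gFn (μ : ℝ → ℝ) : ℝ → ℝ := fun t =>
  if 0 < t then (∫ s in (0:ℝ)..t, μ s) / Real.log (1 + t) else 0

section ZR

lemma zr_decay (ν : ℝ → ℝ) (h0 : ∀ s, 0 ≤ ν s) (hanti : Antitone ν) (K : ℝ) (hK : 0 < K)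
    (hint : ∀ t : ℝ, 0 < t → (∫ s in (0:ℝ)..t, ν s) ≤ K * Real.log (1 + t))
    (δ : ℝ) (hδ : 0 < δ) (hδ1 : δ < 1) :
    ∃ C : ℝ, 0 < C ∧ ∀ s : ℝ, 1 ≤ s → ν s ≤ C * s ^ (δ - 1) := by
  refine ⟨2 * K / δ, by positivity, fun s hs => ?_⟩
  have hs0 : 0 < s := by linarith
  have h1 : s * ν s ≤ ∫ x in (0:ℝ)..s, ν x := by
    have := intervalIntegral.integral_mono_on (μ := volume) (f := fun _ => ν s) (g := ν) hs0.le
      intervalIntegrable_const (hanti.intervalIntegrable) (fun x hx => hanti hx.2)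
    simpa using this
  have h2 : Real.log (1 + s) ≤ 2 * s ^ δ / δ := by
    refine (Real.log_le_rpow_div (by linarith) hδ).trans ?_
    gcongr
    calc (1 + s) ^ δ ≤ (2 * s) ^ δ := by
          apply Real.rpow_le_rpow <;> linarith
      _ = 2 ^ δ * s ^ δ := Real.mul_rpow (by norm_num) hs0.le
      _ ≤ 2 * s ^ δ := by
          gcongr
          calc (2:ℝ) ^ δ ≤ 2 ^ (1:ℝ) := by
                apply Real.rpow_le_rpow_of_exponent_le <;> linarith
            _ = 2 := by simp
  have h3 : s * ν s ≤ K * (2 * s ^ δ / δ) :=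
    (h1.trans (hint s hs0)).trans (by gcongr)
  rw [Real.rpow_sub_one hs0.ne']
  have : ν s ≤ K * (2 * s ^ δ / δ) / s := by
    rw [le_div_iff₀ hs0]; linarith
  refine this.trans (le_of_eq ?_)
  ring

lemma zr_integrable (ν : ℝ → ℝ) (h0 : ∀ s, 0 ≤ ν s) (h1 : ∀ s, ν s ≤ 1)
    (hanti : Antitone ν) (K : ℝ) (hK : 0 < K)
    (hint : ∀ t : ℝ, 0 < t → (∫ s in (0:ℝ)..t, ν s) ≤ K * Real.log (1 + t))
    (p : ℝ) (hp : 1 < p) : IntegrableOn (fun s => ν s ^ p) (Set.Ioi 0) := by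
  have hmeas : Measurable (fun s => ν s ^ p) := hanti.measurable.pow_const p
  obtain ⟨C, hC, hdec⟩ := zr_decay ν h0 hanti K hK hint ((1 - 1 / p) / 2)
    (by have : 1 / p < 1 := by rw [div_lt_one] <;> linarith
        linarith) (by have : 0 < 1 / p := by positivity
                      linarith)
  rw [← Set.Ioc_union_Ioi_eq_Ioi (zero_le_one)]
  refine IntegrableOn.union ?_ ?_
  · refine Measure.integrableOn_of_bounded (M := 1) (by simp) hmeas.aestronglyMeasurable ?_
    refine Eventually.of_forall fun s => ?_
    rw [Real.norm_of_nonneg (Real.rpow_nonneg (h0 s) _)]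
    exact Real.rpow_le_one (h0 s) (h1 s) (by linarith)
  · have hI := (integrableOn_Ioi_rpow_of_lt (a := ((1 - 1 / p) / 2 - 1) * p) (c := 1) (by
      have : ((1 - 1 / p) / 2 - 1) * p = (-1 - p) / 2 := by field_simp; ring
      linarith) one_pos).const_mul (C ^ p)
    refine Integrable.mono' hI hmeas.aestronglyMeasurable ?_
    refine (ae_restrict_iff' measurableSet_Ioi).2 (Eventually.of_forall fun s hs => ?_)
    have hs' : (1:ℝ) < s := hs
    rw [Real.norm_of_nonneg (Real.rpow_nonneg (h0 s) _)]
    calc ν s ^ p ≤ (C * s ^ ((1 - 1 / p) / 2 - 1)) ^ p :=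
          Real.rpow_le_rpow (h0 s) (hdec s hs'.le) (by linarith)
      _ = _ := by
          rw [Real.mul_rpow hC.le (Real.rpow_nonneg (by linarith) _), ← Real.rpow_mul (by linarith)]

lemma zr_integrable_q (ν : ℝ → ℝ) (h0 : ∀ s, 0 ≤ ν s) (h1 : ∀ s, ν s ≤ 1)
    (hanti : Antitone ν)
    (hI : ∀ p : ℝ, 1 < p → IntegrableOn (fun s => ν s ^ p) (Set.Ioi 0))
    (q : ℝ → ℝ) (hq : Continuous q) (r : ℝ) (hr : 0 < r) :
    IntegrableOn (fun s => ν s ^ (1 + 1 / r) * q (ν s ^ (1 / r))) (Set.Ioi 0) := by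
  obtain ⟨C, hC⟩ := (isCompact_Icc (a := (0:ℝ)) (b := 1)).exists_bound_of_continuousOn
    hq.continuousOn
  have hp : 0 < 1 / r := by positivity
  refine Integrable.mono' ((hI (1 + 1 / r) (by linarith)).mul_const C)
    ((hanti.measurable.pow_const _).mul
      (hq.measurable.comp (hanti.measurable.pow_const _))).aestronglyMeasurable ?_
  refine Eventually.of_forall fun s => ?_
  rw [norm_mul, Real.norm_of_nonneg (Real.rpow_nonneg (h0 s) _)]
  gcongr
  · exact Real.rpow_nonneg (h0 s) _
  · exact hC _ ⟨Real.rpow_nonneg (h0 s) _, Real.rpow_le_one (h0 s) (h1 s) hp.le⟩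

lemma zr_poly (ν : ℝ → ℝ) (h0 : ∀ s, 0 ≤ ν s) (h1 : ∀ s, ν s ≤ 1)
    (hanti : Antitone ν)
    (hI : ∀ p : ℝ, 1 < p → IntegrableOn (fun s => ν s ^ p) (Set.Ioi 0)) (A : ℝ)
    (hlim : Tendsto (fun r : ℝ => (∫ s in Set.Ioi (0:ℝ), ν s ^ (1 + 1 / r)) / r)
      atTop (nhds A)) (P : Polynomial ℝ) :
    Tendsto (fun r : ℝ => (∫ s in Set.Ioi (0:ℝ), ν s ^ (1 + 1 / r) * P.eval (ν s ^ (1 / r))) / r)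
      atTop (nhds (A * ∫ x in (0:ℝ)..1, P.eval x)) := by
  induction P using Polynomial.induction_on' with
  | add p q hp hq =>
    have := hp.add hq
    rw [← mul_add, ← intervalIntegral.integral_add (p.continuous.intervalIntegrable _ _)
      (q.continuous.intervalIntegrable _ _)] at this
    simp only [Polynomial.eval_add]
    refine this.congr' ?_
    filter_upwards [eventually_gt_atTop 0] with r hr
    rw [← add_div, ← integral_add (zr_integrable_q ν h0 h1 hanti hI _ p.continuous r hr)
      (zr_integrable_q ν h0 h1 hanti hI _ q.continuous r hr)]
    simp only [mul_add]
  | monomial n c =>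
    have hn : (0:ℝ) < n + 1 := by positivity
    have hT : Tendsto (fun r : ℝ => r / ((n:ℝ) + 1)) atTop atTop :=
      tendsto_id.atTop_div_const hn
    have := (hlim.comp hT).const_mul (c / (n + 1))
    have e : A * ∫ x in (0:ℝ)..1, (Polynomial.monomial n c).eval x = c / (n + 1) * A := by
      simp [Polynomial.eval_monomial]
      ring
    rw [e]
    refine this.congr' ?_
    filter_upwards [eventually_gt_atTop 0] with r hr
    have : ∀ s, ν s ^ (1 + 1 / r) * (Polynomial.monomial n c).eval (ν s ^ (1 / r))
        = c * ν s ^ (1 + 1 / (r / ((n:ℝ) + 1))) := by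
      intro s
      rw [Polynomial.eval_monomial, ← Real.rpow_natCast, ← Real.rpow_mul (h0 s)]
      have : 1 + 1 / (r / ((n:ℝ) + 1)) = (1 + 1 / r) + 1 / r * n := by field_simp; ring
      rw [this, Real.rpow_add_of_nonneg (h0 s) (y := 1 + 1 / r) (by positivity) (by positivity)]
      ring
    simp only [this, Function.comp]
    rw [integral_const_mul]
    field_simp

lemma zr_cont (ν : ℝ → ℝ) (h0 : ∀ s, 0 ≤ ν s) (h1 : ∀ s, ν s ≤ 1)
    (hanti : Antitone ν)
    (hI : ∀ p : ℝ, 1 < p → IntegrableOn (fun s => ν s ^ p) (Set.Ioi 0)) (A : ℝ) (hA : 0 ≤ A)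
    (hlim : Tendsto (fun r : ℝ => (∫ s in Set.Ioi (0:ℝ), ν s ^ (1 + 1 / r)) / r)
      atTop (nhds A)) (q : ℝ → ℝ) (hq : Continuous q) :
    Tendsto (fun r : ℝ => (∫ s in Set.Ioi (0:ℝ), ν s ^ (1 + 1 / r) * q (ν s ^ (1 / r))) / r)
      atTop (nhds (A * ∫ x in (0:ℝ)..1, q x)) := by
  rw [Metric.tendsto_nhds]
  intro ε hε
  set η := ε / (2 * A + 2) with hη
  have hηpos : 0 < η := by positivity
  obtain ⟨P, hP⟩ := exists_polynomial_near_of_continuousOn 0 1 q hq.continuousOn η hηpos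
  have hp := zr_poly ν h0 h1 hanti hI A hlim P
  filter_upwards [eventually_gt_atTop 0, (Metric.tendsto_nhds.1 hp) η hηpos,
    hlim.eventually_lt_const (lt_add_one A)] with r hr hr2 hr3
  have hp1 : 0 < 1 / r := by positivity
  have hint : |(∫ x in (0:ℝ)..1, P.eval x) - ∫ x in (0:ℝ)..1, q x| ≤ η := by
    rw [← intervalIntegral.integral_sub (P.continuous.intervalIntegrable _ _)
      (hq.intervalIntegrable _ _)]
    have := intervalIntegral.norm_integral_le_of_norm_le_const (a := (0:ℝ)) (b := 1) (C := η)
      (f := fun x => P.eval x - q x) (fun x hx => by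
        rw [Set.uIoc_of_le zero_le_one] at hx
        exact (hP x ⟨hx.1.le, hx.2⟩).le)
    simpa using this
  have hL : |(∫ s in Set.Ioi (0:ℝ), ν s ^ (1 + 1 / r) * q (ν s ^ (1 / r))) / r
      - (∫ s in Set.Ioi (0:ℝ), ν s ^ (1 + 1 / r) * P.eval (ν s ^ (1 / r))) / r| ≤ η * (A + 1) := by
    rw [← sub_div, ← integral_sub (zr_integrable_q ν h0 h1 hanti hI _ hq r hr)
      (zr_integrable_q ν h0 h1 hanti hI _ P.continuous r hr), abs_div, abs_of_pos hr]
    have : |∫ s in Set.Ioi (0:ℝ), (ν s ^ (1 + 1 / r) * q (ν s ^ (1 / r))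
        - ν s ^ (1 + 1 / r) * P.eval (ν s ^ (1 / r)))| ≤
        ∫ s in Set.Ioi (0:ℝ), η * ν s ^ (1 + 1 / r) := by
      rw [← Real.norm_eq_abs]
      refine norm_integral_le_of_norm_le ((hI (1 + 1 / r) (by linarith)).const_mul η)
        (Eventually.of_forall fun s => ?_)
      rw [← mul_sub, norm_mul, Real.norm_of_nonneg (Real.rpow_nonneg (h0 s) _), mul_comm]
      gcongr
      · exact Real.rpow_nonneg (h0 s) _
      · rw [norm_sub_rev]
        exact (hP _ ⟨Real.rpow_nonneg (h0 s) _, Real.rpow_le_one (h0 s) (h1 s) hp1.le⟩).le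
    rw [integral_const_mul] at this
    calc _ ≤ (η * ∫ s in Set.Ioi (0:ℝ), ν s ^ (1 + 1 / r)) / r := by gcongr
      _ = η * ((∫ s in Set.Ioi (0:ℝ), ν s ^ (1 + 1 / r)) / r) := by ring
      _ ≤ _ := by gcongr
  have hAi : |A * (∫ x in (0:ℝ)..1, P.eval x) - A * ∫ x in (0:ℝ)..1, q x| ≤ A * η := by
    rw [← mul_sub, abs_mul, abs_of_nonneg hA]
    gcongr
  rw [Real.dist_eq] at hr2 ⊢
  have hη2 : η * (2 * A + 2) = ε := by rw [hη]; field_simp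
  rw [abs_le] at hL hAi
  rw [abs_lt] at hr2 ⊢
  constructor <;> linarith [hL.1, hL.2, hAi.1, hAi.2, hr2.1, hr2.2]

noncomputable def zrQ (a b x : ℝ) : ℝ := max 0 (min 1 ((x - a) / (b - a))) / max x a

lemma zrQ_cont (a b : ℝ) (ha : 0 < a) : Continuous (zrQ a b) := by
  unfold zrQ
  refine Continuous.div (by fun_prop) (by fun_prop) fun x => ?_
  exact (lt_of_lt_of_le ha (le_max_right _ _)).ne'

lemma zrQ_nonneg (a b x : ℝ) (ha : 0 < a) : 0 ≤ zrQ a b x :=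
  div_nonneg (le_max_left _ _) (ha.le.trans (le_max_right _ _))

lemma zrQ_zero (a b x : ℝ) (hab : a < b) (hx : x ≤ a) : zrQ a b x = 0 := by
  have : (x - a) / (b - a) ≤ 0 := div_nonpos_of_nonpos_of_nonneg (by linarith) (by linarith)
  unfold zrQ
  rw [max_eq_left ((min_le_right _ _).trans this), zero_div]

lemma zrQ_le (a b x : ℝ) (ha : 0 < a) (hx : a ≤ x) : zrQ a b x ≤ x⁻¹ := by
  unfold zrQ
  rw [max_eq_left hx, div_eq_mul_inv]
  have : max 0 (min 1 ((x - a) / (b - a))) ≤ 1 := max_le zero_le_one (min_le_left _ _)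
  have h : 0 < x⁻¹ := by have := ha.trans_le hx; positivity
  nlinarith

lemma zrQ_one (a b x : ℝ) (hab : a < b) (hx : b ≤ x) : zrQ a b x = x⁻¹ := by
  unfold zrQ
  have : 1 ≤ (x - a) / (b - a) := by rw [le_div_iff₀] <;> linarith
  rw [max_eq_left (hab.le.trans hx), min_eq_left this, max_eq_right zero_le_one, one_div]

lemma zrQ_int_le (a b : ℝ) (ha : 0 < a) (hab : a < b) (hb : b < 1) :
    ∫ x in (0:ℝ)..1, zrQ a b x ≤ - Real.log a := by
  have hi := fun u v => (zrQ_cont a b ha).intervalIntegrable (μ := volume) u v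
  rw [← intervalIntegral.integral_add_adjacent_intervals (hi 0 a) (hi a 1)]
  have e1 : ∫ x in (0:ℝ)..a, zrQ a b x = 0 := by
    rw [intervalIntegral.integral_congr (g := fun _ => (0:ℝ))]
    · simp
    · intro x hx
      rw [Set.uIcc_of_le ha.le] at hx
      exact zrQ_zero a b x hab hx.2
  have e2 : ∫ x in a..1, zrQ a b x ≤ ∫ x in a..1, x⁻¹ := by
    refine intervalIntegral.integral_mono_on (by linarith) (hi _ _) ?_
      fun x hx => zrQ_le a b x ha hx.1
    exact intervalIntegrable_inv_iff.2 (Or.inr (by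
      rw [Set.uIcc_of_le (by linarith)]; intro h; linarith [h.1]))
  rw [integral_inv_of_pos ha one_pos, one_div, Real.log_inv] at e2
  linarith

lemma zrQ_le_int (a b : ℝ) (ha : 0 < a) (hab : a < b) (hb : b < 1) :
    - Real.log b ≤ ∫ x in (0:ℝ)..1, zrQ a b x := by
  have hi := fun u v => (zrQ_cont a b ha).intervalIntegrable (μ := volume) u v
  rw [← intervalIntegral.integral_add_adjacent_intervals (hi 0 b) (hi b 1)]
  have e1 : 0 ≤ ∫ x in (0:ℝ)..b, zrQ a b x :=
    intervalIntegral.integral_nonneg (by linarith) fun x _ => zrQ_nonneg a b x ha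
  have e2 : ∫ x in b..1, zrQ a b x = ∫ x in b..1, x⁻¹ := by
    refine intervalIntegral.integral_congr fun x hx => ?_
    rw [Set.uIcc_of_le hb.le] at hx
    exact zrQ_one a b x hab hx.1
  rw [integral_inv_of_pos (by linarith) one_pos, one_div, Real.log_inv] at e2
  linarith

/-- pointwise identity -/
lemma zr_mul (v r : ℝ) (hv : 0 ≤ v) (hr : 0 < r) (y : ℝ) :
    v ^ (1 + 1 / r) * y = v * (v ^ (1 / r) * y) := by
  rw [Real.rpow_add_of_nonneg hv zero_le_one (by positivity), Real.rpow_one]; ring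

lemma zr_exp_root (v r : ℝ) (hr : 0 < r) (hv : Real.exp (-r) ≤ v) :
    Real.exp (-1) ≤ v ^ (1 / r) := by
  have : Real.exp (-1) = (Real.exp (-r)) ^ (1 / r) := by
    rw [← Real.exp_mul]; congr 1; field_simp
  rw [this]
  exact Real.rpow_le_rpow (Real.exp_pos _).le hv (by positivity)

lemma zr_exp_root' (v r : ℝ) (h0 : 0 ≤ v) (hr : 0 < r) (hv : v ≤ Real.exp (-r)) :
    v ^ (1 / r) ≤ Real.exp (-1) := by
  have : Real.exp (-1) = (Real.exp (-r)) ^ (1 / r) := by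
    rw [← Real.exp_mul]; congr 1; field_simp
  rw [this]
  exact Real.rpow_le_rpow h0 hv (by positivity)

lemma zr_upper (ν : ℝ → ℝ) (h0 : ∀ s, 0 ≤ ν s) (h1 : ∀ s, ν s ≤ 1)
    (hanti : Antitone ν)
    (hI : ∀ p : ℝ, 1 < p → IntegrableOn (fun s => ν s ^ p) (Set.Ioi 0))
    (a : ℝ) (ha : 0 < a) (hab : a < Real.exp (-1)) (r : ℝ) (hr : 0 < r) :
    (∫ s in (0:ℝ)..(Real.exp r), ν s) ≤
      (∫ s in Set.Ioi (0:ℝ), ν s ^ (1 + 1 / r) * zrQ a (Real.exp (-1)) (ν s ^ (1 / r))) + 1 := by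
  have hF := zr_integrable_q ν h0 h1 hanti hI _ (zrQ_cont a (Real.exp (-1)) ha) r hr
  set F := fun s => ν s ^ (1 + 1 / r) * zrQ a (Real.exp (-1)) (ν s ^ (1 / r)) with hFd
  have hF0 : ∀ s, 0 ≤ F s := fun s =>
    mul_nonneg (Real.rpow_nonneg (h0 s) _) (zrQ_nonneg _ _ _ ha)
  have hFi : IntervalIntegrable F volume 0 (Real.exp r) := by
    rw [intervalIntegrable_iff_integrableOn_Ioc_of_le (Real.exp_pos r).le]
    exact hF.mono_set Set.Ioc_subset_Ioi_self
  calc (∫ s in (0:ℝ)..(Real.exp r), ν s) ≤ ∫ s in (0:ℝ)..(Real.exp r), (F s + Real.exp (-r)) := by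
        refine intervalIntegral.integral_mono_on (Real.exp_pos r).le hanti.intervalIntegrable
          (hFi.add intervalIntegrable_const) fun s _ => ?_
        rcases le_total (ν s) (Real.exp (-r)) with h | h
        · linarith [hF0 s]
        · have hx := zr_exp_root _ r hr h
          have : F s = ν s := by
            simp only [hFd]
            rw [zr_mul _ _ (h0 s) hr, zrQ_one _ _ _ hab hx, mul_inv_cancel₀, mul_one]
            exact ((Real.exp_pos _).trans_le hx).ne'
          linarith [Real.exp_pos (-r)]
    _ = (∫ s in (0:ℝ)..(Real.exp r), F s) + 1 := by
        rw [intervalIntegral.integral_add hFi intervalIntegrable_const]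
        simp [← Real.exp_add]
    _ ≤ _ := by
        rw [intervalIntegral.integral_of_le (Real.exp_pos r).le]
        gcongr
        · exact Eventually.of_forall hF0
        · exact Set.Ioc_subset_Ioi_self

lemma zr_lower (ν : ℝ → ℝ) (h0 : ∀ s, 0 ≤ ν s) (h1 : ∀ s, ν s ≤ 1)
    (hanti : Antitone ν)
    (hI : ∀ p : ℝ, 1 < p → IntegrableOn (fun s => ν s ^ p) (Set.Ioi 0))
    (b : ℝ) (hab : Real.exp (-1) < b) (r : ℝ) (hr : 0 < r) (T : ℝ) (hT : 0 < T)
    (hdec : ∀ s, T < s → ν s ≤ Real.exp (-r)) :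
    (∫ s in Set.Ioi (0:ℝ), ν s ^ (1 + 1 / r) * zrQ (Real.exp (-1)) b (ν s ^ (1 / r))) ≤
     ∫ s in (0:ℝ)..T, ν s := by
  have ha := Real.exp_pos (-1)
  have hF := zr_integrable_q ν h0 h1 hanti hI _ (zrQ_cont (Real.exp (-1)) b ha) r hr
  set F := fun s => ν s ^ (1 + 1 / r) * zrQ (Real.exp (-1)) b (ν s ^ (1 / r)) with hFd
  have e : ∫ s in Set.Ioi (0:ℝ), F s = ∫ s in Set.Ioc 0 T, F s := by
    refine (setIntegral_eq_of_subset_of_forall_sdiff_eq_zero measurableSet_Ioi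
      Set.Ioc_subset_Ioi_self fun s hs => ?_)
    have hs2 : T < s := by
      by_contra h
      exact hs.2 ⟨hs.1, not_lt.1 h⟩
    simp only [hFd]
    rw [zrQ_zero _ _ _ hab (zr_exp_root' _ r (h0 s) hr (hdec s hs2)), mul_zero]
  rw [e, ← intervalIntegral.integral_of_le hT.le]
  refine intervalIntegral.integral_mono_on hT.le ?_ hanti.intervalIntegrable fun s _ => ?_
  · rw [intervalIntegrable_iff_integrableOn_Ioc_of_le hT.le]
    exact hF.mono_set Set.Ioc_subset_Ioi_self
  · simp only [hFd]
    rw [zr_mul _ _ (h0 s) hr]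
    have hx : 0 ≤ ν s ^ (1 / r) := Real.rpow_nonneg (h0 s) _
    have : ν s ^ (1 / r) * zrQ (Real.exp (-1)) b (ν s ^ (1 / r)) ≤ 1 := by
      rcases le_total (ν s ^ (1 / r)) (Real.exp (-1)) with h | h
      · rw [zrQ_zero _ _ _ hab h]; simp
      · calc _ ≤ ν s ^ (1 / r) * (ν s ^ (1 / r))⁻¹ := by
              gcongr
              exact zrQ_le _ _ _ ha h
          _ = 1 := mul_inv_cancel₀ (ha.trans_le h).ne'
    nlinarith [h0 s]

lemma zr_dec_ev (ν : ℝ → ℝ) (h0 : ∀ s, 0 ≤ ν s) (hanti : Antitone ν) (K : ℝ) (hK : 0 < K)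
    (hint : ∀ t : ℝ, 0 < t → (∫ s in (0:ℝ)..t, ν s) ≤ K * Real.log (1 + t))
    (δ : ℝ) (hδ : 0 < δ) (hδ1 : 2 * δ < 1) :
    ∀ᶠ r : ℝ in atTop, ∀ s, Real.exp (r / (1 - 2 * δ)) < s → ν s ≤ Real.exp (-r) := by
  obtain ⟨C, hC, hdec⟩ := zr_decay ν h0 hanti K hK hint δ hδ (by linarith)
  have ht : Tendsto (fun r : ℝ => Real.exp (r / (1 - 2 * δ))) atTop atTop :=
    Real.tendsto_exp_atTop.comp (tendsto_id.atTop_div_const (by linarith))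
  have hs := (tendsto_rpow_atTop hδ).eventually_ge_atTop C
  obtain ⟨S, hS⟩ := eventually_atTop.1 hs
  filter_upwards [eventually_gt_atTop 0, ht.eventually_ge_atTop S] with r hr hr2 s hs
  have h12 : 0 < 1 - 2 * δ := by linarith
  have hs1 : 1 ≤ s := by
    have : 1 ≤ Real.exp (r / (1 - 2 * δ)) := Real.one_le_exp (by positivity)
    linarith
  have hs0 : 0 < s := by linarith
  have hCs : C ≤ s ^ δ := hS s (by linarith)
  calc ν s ≤ C * s ^ (δ - 1) := hdec s hs1
    _ ≤ s ^ δ * s ^ (δ - 1) := by gcongr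
    _ = s ^ (-(1 - 2 * δ)) := by rw [← Real.rpow_add hs0]; ring_nf
    _ ≤ (Real.exp (r / (1 - 2 * δ))) ^ (-(1 - 2 * δ)) :=
        Real.rpow_le_rpow_of_nonpos (Real.exp_pos _) hs.le (by linarith)
    _ = Real.exp (-r) := by rw [← Real.exp_mul]; congr 1; field_simp

lemma zr_main (ν : ℝ → ℝ) (h0 : ∀ s, 0 ≤ ν s) (h1 : ∀ s, ν s ≤ 1)
    (hanti : Antitone ν) (K : ℝ) (hK : 0 < K)
    (hint : ∀ t : ℝ, 0 < t → (∫ s in (0:ℝ)..t, ν s) ≤ K * Real.log (1 + t)) (A : ℝ)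
    (hlim : Tendsto (fun r : ℝ => (∫ s in Set.Ioi (0:ℝ), ν s ^ (1 + 1 / r)) / r)
      atTop (nhds A)) :
    Tendsto (fun r : ℝ => (∫ s in (0:ℝ)..(Real.exp r), ν s) / r) atTop (nhds A) := by
  have hI := zr_integrable ν h0 h1 hanti K hK hint
  have hA : 0 ≤ A := by
    refine ge_of_tendsto hlim ?_
    filter_upwards [eventually_gt_atTop 0] with r hr
    exact div_nonneg (integral_nonneg fun s => Real.rpow_nonneg (h0 s) _) hr.le
  refine tendsto_order.2 ⟨fun c hc => ?_, fun c hc => ?_⟩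
  · have hcont : Tendsto (fun δ : ℝ => (1 - 2 * δ) * (A * (1 - δ) - δ)) (nhdsWithin 0 (Set.Ioi 0))
        (nhds A) := by
      have : Continuous (fun δ : ℝ => (1 - 2 * δ) * (A * (1 - δ) - δ)) := by fun_prop
      have := this.tendsto 0
      simp only [mul_zero, sub_zero, one_mul, mul_one] at this
      exact this.mono_left nhdsWithin_le_nhds
    obtain ⟨δ, hδc, hδ, hδ1⟩ := ((hcont.eventually_const_lt hc).and
      (Ioo_mem_nhdsGT (show (0:ℝ) < 1 / 2 by norm_num))).exists
    have hab : Real.exp (-1) < Real.exp (-(1 - δ)) := Real.exp_lt_exp.2 (by linarith)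
    have hb1 : Real.exp (-(1 - δ)) < 1 := Real.exp_lt_one_iff.2 (by linarith)
    have hq := zr_cont ν h0 h1 hanti hI A hA hlim _
      (zrQ_cont (Real.exp (-1)) (Real.exp (-(1 - δ))) (Real.exp_pos _))
    have hqi := zrQ_le_int _ _ (Real.exp_pos _) hab hb1
    rw [Real.log_exp, neg_neg] at hqi
    have hlt : A * (1 - δ) - δ < A * ∫ x in (0:ℝ)..1, zrQ (Real.exp (-1)) (Real.exp (-(1 - δ))) x := by
      have := mul_le_mul_of_nonneg_left hqi hA
      linarith
    have h12 : 0 < 1 - 2 * δ := by linarith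
    have hev : ∀ᶠ r : ℝ in atTop, c < (1 - 2 * δ) * ((∫ s in (0:ℝ)..(Real.exp (r / (1 - 2 * δ))), ν s) / r) := by
      filter_upwards [eventually_gt_atTop 0, hq.eventually_const_lt hlt,
        zr_dec_ev ν h0 hanti K hK hint δ hδ (by linarith)] with r hr hr2 hr3
      have := zr_lower ν h0 h1 hanti hI _ hab r hr _ (Real.exp_pos _) hr3
      refine hδc.trans_le ?_
      gcongr
      exact hr2.le.trans (by gcongr)
    have ht : Tendsto (fun v : ℝ => v * (1 - 2 * δ)) atTop atTop :=
      tendsto_id.atTop_mul_const h12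
    filter_upwards [ht.eventually hev, eventually_gt_atTop 0] with v hv hv0
    rw [mul_div_cancel_right₀ _ h12.ne'] at hv
    refine hv.trans_le (le_of_eq ?_)
    field_simp
  · have hcont : Tendsto (fun δ : ℝ => A * (1 + δ) + δ + δ) (nhdsWithin 0 (Set.Ioi 0))
        (nhds A) := by
      have : Continuous (fun δ : ℝ => A * (1 + δ) + δ + δ) := by fun_prop
      have := this.tendsto 0
      simp only [add_zero, mul_one] at this
      exact this.mono_left nhdsWithin_le_nhds
    obtain ⟨δ, hδc, hδ⟩ := ((hcont.eventually_lt_const hc).and self_mem_nhdsWithin).exists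
    have hδ : 0 < δ := hδ
    have hab : Real.exp (-(1 + δ)) < Real.exp (-1) := Real.exp_lt_exp.2 (by linarith)
    have hq := zr_cont ν h0 h1 hanti hI A hA hlim _
      (zrQ_cont (Real.exp (-(1 + δ))) (Real.exp (-1)) (Real.exp_pos _))
    have hqi := zrQ_int_le _ _ (Real.exp_pos _) hab (Real.exp_lt_one_iff.2 (by linarith))
    rw [Real.log_exp, neg_neg] at hqi
    have hlt : A * (∫ x in (0:ℝ)..1, zrQ (Real.exp (-(1 + δ))) (Real.exp (-1)) x) < A * (1 + δ) + δ := by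
      have := mul_le_mul_of_nonneg_left hqi hA
      linarith
    have hinv : ∀ᶠ r : ℝ in atTop, r⁻¹ < δ := tendsto_inv_atTop_zero.eventually_lt_const hδ
    filter_upwards [eventually_gt_atTop 0, hq.eventually_lt_const hlt, hinv] with r hr hr2 hr3
    have := zr_upper ν h0 h1 hanti hI _ (Real.exp_pos _) hab r hr
    have h2 := div_le_div_of_nonneg_right this hr.le
    rw [add_div] at h2
    have h4 : 1 / r < δ := by rw [one_div]; exact hr3
    linarith

lemma zr_log : Tendsto (fun t : ℝ => Real.log t / Real.log (1 + t)) atTop (nhds 1) := by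
  have hl : Tendsto (fun t : ℝ => Real.log (1 + t)) atTop atTop :=
    Real.tendsto_log_atTop.comp (tendsto_atTop_add_const_left _ _ tendsto_id)
  have h : Tendsto (fun t : ℝ => 1 - Real.log 2 / Real.log (1 + t)) atTop (nhds 1) := by
    simpa using (hl.const_div_atTop (Real.log 2)).const_sub 1
  refine tendsto_of_tendsto_of_tendsto_of_le_of_le' h tendsto_const_nhds ?_ ?_
  · filter_upwards [eventually_ge_atTop 1] with t ht
    have hp : 0 < Real.log (1 + t) := Real.log_pos (by linarith)
    rw [le_div_iff₀ hp, sub_mul, div_mul_cancel₀ _ hp.ne', one_mul]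
    have := Real.log_le_log (by linarith) (show 1 + t ≤ 2 * t by linarith)
    rw [Real.log_mul (by norm_num) (by linarith)] at this
    linarith
  · filter_upwards [eventually_ge_atTop 1] with t ht
    have hp : 0 < Real.log (1 + t) := Real.log_pos (by linarith)
    rw [div_le_one hp]
    exact Real.log_le_log (by linarith) (by linarith)

lemma zr_neBot :
    (atTop ⊓ ae ((volume : Measure ℝ).restrict (Set.Ioi 0))).NeBot := by
  rw [inf_neBot_iff]
  intro s hs t ht
  obtain ⟨M, hM⟩ := mem_atTop_sets.1 hs
  by_contra hne
  rw [Set.not_nonempty_iff_eq_empty] at hne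
  have hsub : Set.Ioi (max M 0) ⊆ tᶜ := by
    intro x hx hxt
    have : x ∈ s ∩ t := ⟨hM x ((le_max_left _ _).trans (le_of_lt hx)), hxt⟩
    rw [hne] at this
    exact this
  have h0 : (volume : Measure ℝ).restrict (Set.Ioi 0) (Set.Ioi (max M 0)) = 0 :=
    measure_mono_null hsub (mem_ae_iff.1 ht)
  rw [Measure.restrict_apply measurableSet_Ioi, Set.Ioi_inter_Ioi] at h0
  simp at h0

end ZR

/-- **Theorem 10.6, second part.** Let `μ : [0,∞) → [0,1]` be nonincreasing with
`∫₀^t μ ≤ K log(1+t)`, and suppose the limit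
`lim_{r→∞} (1/r)∫₀^∞ μ(s)^{1+1/r} ds = A` exists.  Then `ω(g) = A` for every positive
dilation-invariant linear functional `ω` on `L∞((0,∞))` lying between the essential
liminf and limsup at `+∞`, where `g(t) = (1/log(1+t))∫₀^t μ(s) ds`. -/
theorem zeta_residue_limit_implies_dixmier_trace (μ : ℝ → ℝ)
    (hμ0 : ∀ s : ℝ, 0 ≤ s → 0 ≤ μ s) (hμ1 : ∀ s : ℝ, 0 ≤ s → μ s ≤ 1)
    (hmono : AntitoneOn μ (Set.Ici 0)) (K : ℝ) (hK : 0 < K)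
    (hint : ∀ t : ℝ, 0 < t → (∫ s in (0:ℝ)..t, μ s) ≤ K * Real.log (1 + t))
    (A : ℝ)
    (hlim : Tendsto (fun r : ℝ => (∫ s in Set.Ioi (0:ℝ), μ s ^ (1 + 1 / r)) / r)
      atTop (nhds A)) :
    ∀ ω : (ℝ → ℝ) →ₗ[ℝ] ℝ,
      -- ω is positive
      (∀ f : ℝ → ℝ, Measurable f → BddFun f →
        (∀ᵐ x ∂((volume : Measure ℝ).restrict (Set.Ioi 0)), 0 ≤ f x) → 0 ≤ ω f) →
      -- ω lies between the essential liminf and limsup at +∞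
      (∀ f : ℝ → ℝ, Measurable f → BddFun f →
        liminf f (atTop ⊓ ae ((volume : Measure ℝ).restrict (Set.Ioi 0))) ≤ ω f ∧
          ω f ≤ limsup f (atTop ⊓ ae ((volume : Measure ℝ).restrict (Set.Ioi 0)))) →
      -- ω is dilation invariant
      (∀ f : ℝ → ℝ, Measurable f → BddFun f →
        ∀ c : ℝ, 0 < c → ω (fun t => f (t / c)) = ω f) →
      ω (gFn μ) = A := by
  intro ω _ hω _
  set ν : ℝ → ℝ := fun s => μ (max s 0) with hν
  have h0 : ∀ s, 0 ≤ ν s := fun s => hμ0 _ (le_max_right _ _)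
  have h1 : ∀ s, ν s ≤ 1 := fun s => hμ1 _ (le_max_right _ _)
  have hanti : Antitone ν := fun x y hxy =>
    hmono (Set.mem_Ici.2 (le_max_right _ _)) (Set.mem_Ici.2 (le_max_right _ _)) (max_le_max_right 0 hxy)
  have hΦ : ∀ t : ℝ, 0 < t → (∫ s in (0:ℝ)..t, μ s) = ∫ s in (0:ℝ)..t, ν s := by
    intro t ht
    refine intervalIntegral.integral_congr fun s hs => ?_
    rw [Set.uIcc_of_le ht.le] at hs
    simp only [hν, max_eq_left hs.1]
  have hint' : ∀ t : ℝ, 0 < t → (∫ s in (0:ℝ)..t, ν s) ≤ K * Real.log (1 + t) := fun t ht =>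
    hΦ t ht ▸ hint t ht
  have hlim' : Tendsto (fun r : ℝ => (∫ s in Set.Ioi (0:ℝ), ν s ^ (1 + 1 / r)) / r)
      atTop (nhds A) := by
    refine hlim.congr fun r => ?_
    congr 1
    refine setIntegral_congr_fun measurableSet_Ioi fun s hs => ?_
    simp only [hν, max_eq_left (le_of_lt (Set.mem_Ioi.1 hs))]
  have hmain := zr_main ν h0 h1 hanti K hK hint' A hlim'
  have hg : gFn μ = gFn ν := by
    funext t
    unfold gFn
    split_ifs with ht
    · rw [hΦ t ht]
    · rfl
  rw [hg]
  have hT : Tendsto (gFn ν) atTop (nhds A) := by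
    have := (hmain.comp Real.tendsto_log_atTop).mul zr_log
    rw [mul_one] at this
    refine this.congr' ?_
    filter_upwards [eventually_gt_atTop 1] with t ht
    have hl : Real.log t ≠ 0 := (Real.log_pos ht).ne'
    simp only [Function.comp, gFn, Real.exp_log (zero_lt_one.trans ht), zero_lt_one.trans ht,
      if_true]
    field_simp
  have hmeas : Measurable (gFn ν) := by
    unfold gFn
    refine Measurable.ite measurableSet_Ioi ?_ measurable_const
    refine Measurable.div ?_ (Real.measurable_log.comp (measurable_const.add measurable_id))
    exact (intervalIntegral.continuous_primitive (fun a b => hanti.intervalIntegrable) 0).measurable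
  have hbdd : BddFun (gFn ν) := by
    refine ⟨K, fun t => ?_⟩
    unfold gFn
    split_ifs with ht
    · have hp : 0 < Real.log (1 + t) := Real.log_pos (by linarith)
      rw [abs_of_nonneg (div_nonneg
        (intervalIntegral.integral_nonneg ht.le fun s _ => h0 s) hp.le), div_le_iff₀ hp]
      exact hint' t ht
    · simpa using hK.le
  have hF : Tendsto (gFn ν) (atTop ⊓ ae ((volume : Measure ℝ).restrict (Set.Ioi 0))) (nhds A) :=
    hT.mono_left inf_le_left
  haveI := zr_neBot
  have := hω _ hmeas hbdd
  rw [hF.liminf_eq, hF.limsup_eq] at this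
  exact le_antisymm this.2 this.1
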